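/- The lexicographically maximal element of a nonempty compact convex set M ⊆ ℝ^n (under sorted-entry lexicographic comparison) is unique; i.e., if x, y ∈ M are both such that no element of M lexicographically dominates them, then x = y, provided whenever x ≠ y in M one of them satisfies the hypothesis of the averaging lemma (there is j with y_j > x_j and y_i ≥ min{x_i, x_j} for all i, or symmetrically). -/

import Mathlib

/-!
Suppose `x ≠ y` are both maximal. One of the two averaging hypotheses holds, and the midpoint
`(x + y) / 2`, which lies in `M` by convexity, then dominates `x` (or `y`), contradicting maximality.

For the averaging lemma, put `t = x j` and let `z` be the midpoint. Entries with `x i ≤ t` do not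
decrease in passing from `x` to `z`, entries with `x i > t` stay above `t`, and the entry `j` rises
strictly above `t`. Hence `{z ≤ a} ⊆ {x ≤ a}` for all `a ≤ t`, and the inclusion is strict for
`a = t`. The `p`-th sorted entry of `v` is at most `a` exactly when more than `p` entries of `v`
are at most `a` (`sortedVec_le_iff`), so with `q = #{z ≤ t}` the sorted entries of `x` are at most
those of `z` at all positions up to `q`, strictly at `q`.
-/

open Finset

/-- The non-decreasing rearrangement of `v`. -/
noncomputable def sortedVec (n : ℕ) (v : Fin n → ℝ) : Fin n → ℝ := v ∘ Tuple.sort v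

/-- `z` lexicographically dominates `x`: the sorted version of `z` is strictly greater
than the sorted version of `x` in the lexicographic order. -/
noncomputable def LexDom (n : ℕ) (z x : Fin n → ℝ) : Prop :=
  toLex (sortedVec n x) < toLex (sortedVec n z)

lemma sortedVec_le_iff {n : ℕ} (v : Fin n → ℝ) (a : ℝ) (p : Fin n) :
    sortedVec n v p ≤ a ↔ (p : ℕ) < #{i | v i ≤ a} := by
  have hcard : #{i | sortedVec n v i ≤ a} = #{i | v i ≤ a} :=
    Finset.card_equiv (Tuple.sort v) fun i => by
      rw [Finset.mem_filter_univ, Finset.mem_filter_univ]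
      rfl
  rw [← hcard]
  exact (Tuple.lt_card_le_iff_apply_le_of_monotone (Tuple.monotone_sort v)).symm

lemma toLex_lt_of_le_of_lt {n : ℕ} {a b : Fin n → ℝ} (q : Fin n)
    (hle : ∀ p ≤ q, a p ≤ b p) (hlt : a q < b q) : toLex a < toLex b := by
  -- The first position where `a` and `b` differ is at most `q`.
  obtain ⟨p, hp, hmin⟩ := WellFounded.has_min (wellFounded_lt (α := Fin n))
    {i | a i ≠ b i} ⟨q, hlt.ne⟩
  have hpq : p ≤ q := not_lt.1 (hmin q hlt.ne)
  refine ⟨p, fun i hi => ?_, lt_of_le_of_ne (hle p hpq) hp⟩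
  by_contra h
  exact hmin i h hi

/-- If passing from `x` to `z` lowers no entry that is at most `t = x j`, keeps the entries above
`t` above `t`, and lifts the entry `j` above `t`, then `z` lexicographically dominates `x`. -/
lemma lexDom_of_threshold {n : ℕ} {x z : Fin n → ℝ} (j : Fin n) (hj : x j < z j)
    (hlow : ∀ i, x i ≤ x j → x i ≤ z i) (hhigh : ∀ i, x j < x i → x j < z i) :
    LexDom n z x := by
  have hsub : ∀ a ≤ x j, ∀ i, z i ≤ a → x i ≤ a := by
    intro a ha i hi
    rcases le_or_gt (x i) (x j) with h | h
    · exact (hlow i h).trans hi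
    · exact absurd (hhigh i h) (not_lt.2 (hi.trans ha))
  have hcard : #{i | z i ≤ x j} < #{i | x i ≤ x j} := by
    refine Finset.card_lt_card ((Finset.ssubset_iff_of_subset fun i hi => ?_).2 ⟨j, ?_, ?_⟩)
    · simpa using hsub _ le_rfl i (by simpa using hi)
    · simp
    · simpa using hj
  have hn : #{i | z i ≤ x j} < n :=
    hcard.trans_le ((Finset.card_le_univ _).trans_eq (Fintype.card_fin n))
  have hx : ∀ p : Fin n, p ≤ ⟨_, hn⟩ → sortedVec n x p ≤ x j := fun p hp =>
    (sortedVec_le_iff x _ p).2 (lt_of_le_of_lt (Fin.le_def.1 hp) hcard)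
  refine toLex_lt_of_le_of_lt ⟨_, hn⟩ (fun p hp => ?_) ?_
  · rcases le_or_gt (sortedVec n z p) (x j) with h | h
    · have h1 := (sortedVec_le_iff z _ p).1 (le_refl (sortedVec n z p))
      refine (sortedVec_le_iff x _ p).2 (h1.trans_le (Finset.card_le_card fun i hi => ?_))
      simpa using hsub _ h i (by simpa using hi)
    · exact (hx p hp).trans h.le
  · refine (hx _ le_rfl).trans_lt (not_le.1 fun h => ?_)
    exact lt_irrefl _ ((sortedVec_le_iff z _ _).1 h)

/-- The averaging lemma. -/
lemma lexDom_midpoint {n : ℕ} {x y : Fin n → ℝ} (j : Fin n) (hj : x j < y j)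
    (hmin : ∀ i, min (x i) (x j) ≤ y i) :
    LexDom n ((1 / 2 : ℝ) • x + (1 / 2 : ℝ) • y) x := by
  refine lexDom_of_threshold j ?_ (fun i hi => ?_) (fun i hi => ?_)
  · simp only [Pi.add_apply, Pi.smul_apply, smul_eq_mul]
    linarith
  · have := hmin i
    rw [min_eq_left hi] at this
    simp only [Pi.add_apply, Pi.smul_apply, smul_eq_mul]
    linarith
  · have := hmin i
    rw [min_eq_right hi.le] at this
    simp only [Pi.add_apply, Pi.smul_apply, smul_eq_mul]
    linarith

/-- In a nonempty compact convex set in which any two distinct points satisfy (one way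
or the other) the hypothesis of the averaging lemma, the lexicographically maximal
element is unique. -/
theorem lex_maximal_unique (n : ℕ) (M : Set (Fin n → ℝ)) (hne : M.Nonempty)
    (hcomp : IsCompact M) (hconv : Convex ℝ M)
    (havg : ∀ x ∈ M, ∀ y ∈ M, x ≠ y →
      (∃ j : Fin n, x j < y j ∧ ∀ i : Fin n, min (x i) (x j) ≤ y i) ∨
      (∃ j : Fin n, y j < x j ∧ ∀ i : Fin n, min (y i) (y j) ≤ x i))
    (x y : Fin n → ℝ) (hx : x ∈ M) (hy : y ∈ M)
    (hxmax : ∀ m ∈ M, ¬ LexDom n m x) (hymax : ∀ m ∈ M, ¬ LexDom n m y) :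
    x = y := by
  by_contra hxy
  rcases havg x hx y hy hxy with ⟨j, hj, hmin⟩ | ⟨j, hj, hmin⟩
  · exact hxmax _ (hconv hx hy (by norm_num) (by norm_num) (by norm_num))
      (lexDom_midpoint j hj hmin)
  · exact hymax _ (hconv hy hx (by norm_num) (by norm_num) (by norm_num))
      (lexDom_midpoint j hj hmin)
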